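/- Let σ₁, σ₂, σ₃ be the Pauli matrices and define the 4×4 complex matrices γ₂ = σ₃ ⊗ I₂, γ_y = (iσ₂) ⊗ σ₁, γ₃ = (iσ₂) ⊗ σ₂, γ₄ = (iσ₂) ⊗ σ₃ (Kronecker products). For c > 0 and β ∈ ℝ, set a = (1+β)·γ₃γ₄ − γ₂γ₄ and b = c·I₄ − (1/√2)(γ₃ + (1−β)γ₂)γ_y. Then a + ib or a − ib has nonzero kernel if and only if c² = β + (3/2)β² + √2·|β² − 2| or c² = β + (3/2)β² − √2·|β² − 2|. -/

import Mathlib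

open Matrix Complex
open scoped Kronecker

noncomputable section

/-- Pauli matrix σ₁. -/
def σ1 : Matrix (Fin 2) (Fin 2) ℂ := !![0, 1; 1, 0]
/-- Pauli matrix σ₂. -/
def σ2 : Matrix (Fin 2) (Fin 2) ℂ := !![0, -I; I, 0]
/-- Pauli matrix σ₃. -/
def σ3 : Matrix (Fin 2) (Fin 2) ℂ := !![1, 0; 0, -1]

/-- γ₂ = σ₃ ⊗ I₂ (timelike). -/
def γ2' : Matrix (Fin 2 × Fin 2) (Fin 2 × Fin 2) ℂ := σ3 ⊗ₖ (1 : Matrix (Fin 2) (Fin 2) ℂ)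
/-- γ_y = (iσ₂) ⊗ σ₁. -/
def γy : Matrix (Fin 2 × Fin 2) (Fin 2 × Fin 2) ℂ := (I • σ2) ⊗ₖ σ1
/-- γ₃ = (iσ₂) ⊗ σ₂. -/
def γ3' : Matrix (Fin 2 × Fin 2) (Fin 2 × Fin 2) ℂ := (I • σ2) ⊗ₖ σ2
/-- γ₄ = (iσ₂) ⊗ σ₃. -/
def γ4' : Matrix (Fin 2 × Fin 2) (Fin 2 × Fin 2) ℂ := (I • σ2) ⊗ₖ σ3

/-!
Since `γ₃γ₄` and `γ₃γ_y` have left tensor factor `1`, while `γ₂γ₄` and `γ₂γ_y` have left tensor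
factor `σ₁`, the matrices `a ± ib` have the form `1 ⊗ A + σ₁ ⊗ B`. Triangularising `σ₁` gives the
determinant `det (A + B) * det (A - B)`, and each factor is the determinant `w² - x² - y² - z²`
of a combination `w + xσ₁ + yσ₂ + zσ₃`. For either sign the product is
`(c² - (β + (3/2)β²))² - 2(β² - 2)²`.
-/

theorem ker_mulVecLin_ne_bot_iff_det_eq_zero {n R : Type*} [Fintype n] [DecidableEq n]
    [CommRing R] [IsDomain R] (M : Matrix n n R) :
    LinearMap.ker M.mulVecLin ≠ ⊥ ↔ M.det = 0 := by
  rw [← toLin'_apply', ← LinearMap.det_toLin', LinearMap.det_eq_zero_iff_ker_ne_bot]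

theorem det_fromBlocks_eq_det_add_mul_det_sub {n R : Type*} [Fintype n] [DecidableEq n] [CommRing R]
    (A B : Matrix n n R) :
    (fromBlocks A B B A).det = (A + B).det * (A - B).det := by
  have triangularize : fromBlocks 1 1 0 1 * fromBlocks A B B A * fromBlocks 1 (-1) 0 1 =
      fromBlocks (A + B) 0 B (A - B) := by
    simp only [fromBlocks_multiply, fromBlocks_inj]
    refine ⟨?_, ?_, ?_, ?_⟩ <;> noncomm_ring
  simpa only [det_mul, det_fromBlocks_zero₂₁, det_fromBlocks_zero₁₂, det_one, one_mul, mul_one]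
    using congrArg det triangularize

theorem det_one_kronecker_add_σ1_kronecker {n : Type*} [Fintype n] [DecidableEq n]
    (A B : Matrix n n ℂ) :
    ((1 : Matrix (Fin 2) (Fin 2) ℂ) ⊗ₖ A + σ1 ⊗ₖ B).det = (A + B).det * (A - B).det := by
  let e : Fin 2 × n ≃ n ⊕ n :=
    (finTwoEquiv.prodCongr (Equiv.refl n)).trans (Equiv.boolProdEquivSum n)
  have blocks : (1 : Matrix (Fin 2) (Fin 2) ℂ) ⊗ₖ A + σ1 ⊗ₖ B =
      (fromBlocks A B B A).submatrix e e := by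
    ext ⟨i, j⟩ ⟨k, l⟩
    fin_cases i <;> fin_cases k <;> simp [e, σ1, finTwoEquiv, Equiv.boolProdEquivSum]
  rw [blocks, det_submatrix_equiv_self, det_fromBlocks_eq_det_add_mul_det_sub]

theorem det_smul_one_add_pauli (w x y z : ℂ) :
    (w • 1 + x • σ1 + y • σ2 + z • σ3).det = w ^ 2 - x ^ 2 - y ^ 2 - z ^ 2 := by
  have entries : w • 1 + x • σ1 + y • σ2 + z • σ3 =
      !![w + z, x - y * I; x + y * I, w - z] := by
    simp [one_fin_two, σ1, σ2, σ3, sub_eq_add_neg]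
  rw [entries, det_fin_two_of]
  linear_combination y ^ 2 * I_sq

theorem σ2_mul_σ2 : σ2 * σ2 = 1 := by
  simp [σ2, one_fin_two]

theorem σ2_mul_σ1 : σ2 * σ1 = -I • σ3 := by
  simp [σ1, σ2, σ3]

theorem σ2_mul_σ3 : σ2 * σ3 = I • σ1 := by
  simp [σ1, σ2, σ3]

theorem σ3_mul_σ2 : σ3 * σ2 = -I • σ1 := by
  simp [σ1, σ2, σ3]

theorem γ3'_mul_γ4' : γ3' * γ4' = (1 : Matrix (Fin 2) (Fin 2) ℂ) ⊗ₖ (-I • σ1) := by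
  rw [γ3', γ4', ← mul_kronecker_mul, smul_mul_smul_comm, I_mul_I, σ2_mul_σ2, σ2_mul_σ3,
    smul_kronecker, ← kronecker_smul, smul_smul, neg_one_mul]

theorem γ2'_mul_γ4' : γ2' * γ4' = σ1 ⊗ₖ σ3 := by
  simp [γ2', γ4', ← mul_kronecker_mul, σ3_mul_σ2, smul_smul]

theorem γ3'_mul_γy : γ3' * γy = (1 : Matrix (Fin 2) (Fin 2) ℂ) ⊗ₖ (I • σ3) := by
  rw [γ3', γy, ← mul_kronecker_mul, smul_mul_smul_comm, I_mul_I, σ2_mul_σ2, σ2_mul_σ1,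
    smul_kronecker, ← kronecker_smul, smul_smul, neg_one_mul, neg_neg]

theorem γ2'_mul_γy : γ2' * γy = σ1 ⊗ₖ σ1 := by
  simp [γ2', γy, ← mul_kronecker_mul, σ3_mul_σ2, smul_smul]

/-- The matrix `b = c I₄ − (1/√2)(γ₃ + (1−β)γ₂)γ_y` of the Killing spinor invariance equation. -/
def killingB (β c : ℝ) : Matrix (Fin 2 × Fin 2) (Fin 2 × Fin 2) ℂ :=
  (c : ℂ) • 1 - ((1 / Real.sqrt 2 : ℝ) : ℂ) • ((γ3' + ((1 - β : ℝ) : ℂ) • γ2') * γy)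

/-- The matrix `a = (1+β) γ₃γ₄ − γ₂γ₄` of the Killing spinor invariance equation. -/
def killingA (β : ℝ) : Matrix (Fin 2 × Fin 2) (Fin 2 × Fin 2) ℂ :=
  ((1 + β : ℝ) : ℂ) • (γ3' * γ4') - γ2' * γ4'

theorem killingA_add_smul_killingB (β c : ℝ) (s : ℂ) :
    killingA β + s • killingB β c =
      (1 : Matrix (Fin 2) (Fin 2) ℂ) ⊗ₖ
        ((s * c) • 1 + (-I * (1 + β)) • σ1 + (-I * s * (1 / Real.sqrt 2 : ℝ)) • σ3) +
      σ1 ⊗ₖ ((-s * (1 / Real.sqrt 2 : ℝ) * (1 - β)) • σ1 + (-1 : ℂ) • σ3) := by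
  rw [killingA, killingB, add_mul, smul_mul_assoc, γ3'_mul_γ4', γ2'_mul_γ4', γ3'_mul_γy,
    γ2'_mul_γy, ← one_kronecker_one]
  simp only [kronecker_add, kronecker_smul]
  push_cast
  module

theorem det_killingA_add_smul_killingB (β c : ℝ) {s : ℂ} (hs : s ^ 2 = -1) :
    (killingA β + s • killingB β c).det =
      ((c ^ 2 - (β + 3 / 2 * β ^ 2)) ^ 2 - 2 * (β ^ 2 - 2) ^ 2 : ℝ) := by
  rw [killingA_add_smul_killingB, det_one_kronecker_add_σ1_kronecker]
  generalize hk : ((1 / Real.sqrt 2 : ℝ) : ℂ) = k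
  have hk_sq : k ^ 2 = 1 / 2 := by
    rw [← hk, ← ofReal_pow, div_pow, Real.sq_sqrt zero_le_two]
    norm_num
  set A : Matrix (Fin 2) (Fin 2) ℂ := (s * c) • 1 + (-I * (1 + β)) • σ1 + (-I * s * k) • σ3
  set B : Matrix (Fin 2) (Fin 2) ℂ := (-s * k * (1 - β)) • σ1 + (-1 : ℂ) • σ3
  have det_add_smul {ε : ℂ} (hε : ε ^ 2 = 1) : (A + ε • B).det =
      -(c ^ 2 - (β + 3 / 2 * β ^ 2)) + ε * (2 * I * s * k * (β ^ 2 - 2)) := by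
    have pauli : A + ε • B =
        (s * c) • 1 + (-I * (1 + β) - ε * (s * k * (1 - β))) • σ1 + (0 : ℂ) • σ2
          + (-I * s * k - ε) • σ3 := by
      module
    rw [pauli, det_smul_one_add_pauli]
    grind [I_sq]
  have det_add := det_add_smul (one_pow 2)
  have det_sub := det_add_smul neg_one_sq
  rw [one_smul] at det_add
  rw [neg_one_smul, ← sub_eq_add_neg] at det_sub
  have sq_coeff : (2 * I * s * k) ^ 2 = 2 := by
    simp only [mul_pow, I_sq, hs, hk_sq]
    norm_num
  rw [det_add, det_sub]
  push_cast
  linear_combination (-(β ^ 2 - 2 : ℂ) ^ 2) * sq_coeff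

theorem sub_sq_sub_mul_sq_eq_zero_iff {r : ℝ} (hr : 0 ≤ r) (x p q : ℝ) :
    (x - p) ^ 2 - r * q ^ 2 = 0 ↔ x = p + Real.sqrt r * |q| ∨ x = p - Real.sqrt r * |q| := by
  have mul_sq_eq : r * q ^ 2 = (Real.sqrt r * |q|) ^ 2 := by
    rw [mul_pow, Real.sq_sqrt hr, sq_abs]
  rw [mul_sq_eq, sub_eq_zero, sq_eq_sq_iff_eq_or_eq_neg, sub_eq_iff_eq_add',
    sub_eq_iff_eq_add', ← sub_eq_add_neg]

theorem ker_killingA_add_smul_killingB_ne_bot_iff (β c : ℝ) {s : ℂ} (hs : s ^ 2 = -1) :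
    LinearMap.ker (killingA β + s • killingB β c).mulVecLin ≠ ⊥ ↔
      c ^ 2 = β + 3 / 2 * β ^ 2 + Real.sqrt 2 * |β ^ 2 - 2| ∨
        c ^ 2 = β + 3 / 2 * β ^ 2 - Real.sqrt 2 * |β ^ 2 - 2| := by
  rw [ker_mulVecLin_ne_bot_iff_det_eq_zero, det_killingA_add_smul_killingB β c hs,
    ofReal_eq_zero, sub_sq_sub_mul_sq_eq_zero_iff zero_le_two]

/-- For `a = (1+β) γ₃γ₄ − γ₂γ₄` and `b = cI₄ − (1/√2)(γ₃ + (1−β)γ₂)γ_y` with `c > 0`: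
one of `a + ib`, `a − ib` has nonzero kernel iff
`c² = β + (3/2)β² + √2|β² − 2|` or `c² = β + (3/2)β² − √2|β² − 2|`
(the case λ₈ for `ℝ × AdS₄`). -/
theorem stmt_10 (β c : ℝ) (hc : 0 < c) :
    (LinearMap.ker ((((1 + β : ℝ) : ℂ) • (γ3' * γ4') - γ2' * γ4')
        + I • ((c : ℂ) • 1
          - ((1 / Real.sqrt 2 : ℝ) : ℂ) • ((γ3' + ((1 - β : ℝ) : ℂ) • γ2') * γy))).mulVecLin
        ≠ ⊥ ∨
      LinearMap.ker ((((1 + β : ℝ) : ℂ) • (γ3' * γ4') - γ2' * γ4')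
        - I • ((c : ℂ) • 1
          - ((1 / Real.sqrt 2 : ℝ) : ℂ) • ((γ3' + ((1 - β : ℝ) : ℂ) • γ2') * γy))).mulVecLin
        ≠ ⊥) ↔
    (c ^ 2 = β + 3 / 2 * β ^ 2 + Real.sqrt 2 * |β ^ 2 - 2| ∨
      c ^ 2 = β + 3 / 2 * β ^ 2 - Real.sqrt 2 * |β ^ 2 - 2|) := by
  change (LinearMap.ker (killingA β + I • killingB β c).mulVecLin ≠ ⊥ ∨
    LinearMap.ker (killingA β - I • killingB β c).mulVecLin ≠ ⊥) ↔ _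
  have neg_I_sq : (-I) ^ 2 = -1 := by rw [neg_sq, I_sq]
  rw [sub_eq_add_neg, ← neg_smul, ker_killingA_add_smul_killingB_ne_bot_iff β c I_sq,
    ker_killingA_add_smul_killingB_ne_bot_iff β c neg_I_sq, or_self]

end
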